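/- For every ordinal α < ε₀: α ↘₀ 0; moreover, if α ≥ 1 then α ↘₀ 1, and if α ≥ 2 then α ↘₁ 2. -/

import Mathlib

/-!
For a nonzero normal form `α`, the notation `{α}(n)` is again a normal form and denotes a strictly
smaller ordinal (`fs_spec`), so iterating `{·}(n)` cannot go on forever. Hence a notation `β` is
reached from `α` as soon as some property of `α` which fails at `0` (unless `β = 0`) is preserved
by every step taken from a notation other than `β` (`step_of_invariant`).

For `β = 0` nothing more is needed; the other two claims rest on the fact that a single step
cannot jump over the target: `{α}(n) = 0` forces `α ≤ 1` (`fs_eq_zero`), and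
`{α}(1) = 1` forces `α = 2` among the normal forms (`fs_eq_one`). The latter is where
`n = 1` matters: `{ω^(β+1)}(1) = ω^β·2` is never `1`, whereas `{ω}(0) = 1`.
-/

namespace Paper

/-- `pred? o = some β` when the notation `o` denotes a successor ordinal `β + 1`;
`pred? o = none` when `o` denotes `0` or a limit ordinal. -/
def pred? : ONote → Option ONote
  | ONote.zero => none
  | ONote.oadd e m a =>
    match a with
    | ONote.oadd e' m' a' => (pred? (ONote.oadd e' m' a')).map (ONote.oadd e m)
    | ONote.zero => if e = 0 then some (ONote.ofNat ((m : ℕ) - 1)) else none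

/-- The fundamental sequence: `fs α n` is `{α}(n)`.  We have `{0}(n) = 0`,
`{β+1}(n) = β`, `{γ + ω^(δ+1)}(n) = γ + ω^δ·(n+1)` and `{γ + ω^δ}(n) = γ + ω^({δ}(n))`
for `δ` a limit. -/
def fs : ONote → ℕ → ONote
  | ONote.zero, _ => ONote.zero
  | ONote.oadd e m a, n =>
    match a with
    | ONote.oadd e' m' a' => ONote.oadd e m (fs (ONote.oadd e' m' a') n)
    | ONote.zero =>
      match e with
      | ONote.zero => ONote.ofNat ((m : ℕ) - 1)
      | ONote.oadd e1 m1 a1 =>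
        let tail : ONote :=
          match pred? (ONote.oadd e1 m1 a1) with
          | some p => ONote.oadd p ⟨n + 1, n.succ_pos⟩ ONote.zero
          | none => ONote.oadd (fs (ONote.oadd e1 m1 a1) n) 1 ONote.zero
        if (m : ℕ) = 1 then tail
        else ONote.oadd (ONote.oadd e1 m1 a1) ⟨max ((m : ℕ) - 1) 1, by omega⟩ tail

/-- Iteration of the fundamental sequence: `fund α n x` applies `{·}(n)` to `α`, `x` times. -/
def fund (α : ONote) (n : ℕ) : ℕ → ONote
  | 0 => α
  | x + 1 => fs (fund α n x) n

/-- `StepAt α n x β` expresses `α ↘ₙˣ β`: some `y ≤ x` has `fund α n y = β`. -/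
def StepAt (α : ONote) (n x : ℕ) (β : ONote) : Prop :=
  ∃ y ≤ x, fund α n y = β

/-- `Step α n β` expresses `α ↘ₙ β`. -/
def Step (α : ONote) (n : ℕ) (β : ONote) : Prop :=
  ∃ x, StepAt α n x β


open ONote

lemma pred?_eq_fs {α p : ONote} (h : pred? α = some p) (n : ℕ) : fs α n = p := by
  induction α generalizing p with
  | zero => simp [pred?] at h
  | oadd e m a _ iha =>
    cases a with
    | zero =>
      cases e with
      | zero => simpa [pred?, fs] using h
      | oadd e' m' a' =>
        rw [pred?, if_neg (fun h => ONote.noConfusion h)] at h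
        cases h
    | oadd e' m' a' =>
      rw [pred?, Option.map_eq_some_iff] at h
      obtain ⟨q, hq, rfl⟩ := h
      rw [fs, iha hq]

lemma fs_oadd_of_ne_zero (e : ONote) (m : ℕ+) {a : ONote} (ha : a ≠ 0) (n : ℕ) :
    fs (oadd e m a) n = oadd e m (fs a n) := by
  cases a with
  | zero => exact absurd rfl ha
  | oadd e' m' a' => rw [fs]

lemma fs_natural (m : ℕ+) (n : ℕ) : fs (oadd 0 m 0) n = ofNat ((m : ℕ) - 1) := rfl

/-- The last summand of `ω^e·m` (`e ≠ 0`) is replaced by `ω^({e}(n))·c`, where `c = n + 1`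
unless `e` is a limit: the exponent has this form in the successor case as well, as then `{e}(n)` is
the predecessor of `e`. -/
lemma fs_omega_pow {e : ONote} (he : e ≠ 0) (m : ℕ+) (n : ℕ) :
    ∃ c : ℕ+, ((c : ℕ) = n + 1 ∨ pred? e = none) ∧
      (fs (oadd e m 0) n = oadd (fs e n) c 0 ∨
        ∃ k : ℕ+, (k : ℕ) < m ∧ fs (oadd e m 0) n = oadd e k (oadd (fs e n) c 0)) := by
  cases e with
  | zero => exact absurd rfl he
  | oadd e1 m1 a1 =>
    have hm := m.pos
    cases hp : pred? (oadd e1 m1 a1) with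
    | some p =>
      refine ⟨⟨n + 1, n.succ_pos⟩, Or.inl rfl, ?_⟩
      rw [pred?_eq_fs hp n]
      by_cases h1 : (m : ℕ) = 1
      · left
        change fs (oadd (oadd e1 m1 a1) m ONote.zero) n = _
        rw [fs, hp]
        simp [h1]
      · right
        refine ⟨⟨max ((m : ℕ) - 1) 1, by omega⟩, ?_, ?_⟩
        · change max ((m : ℕ) - 1) 1 < m
          omega
        · change fs (oadd (oadd e1 m1 a1) m ONote.zero) n = _
          rw [fs, hp]
          simp [h1]
    | none =>
      refine ⟨1, Or.inr rfl, ?_⟩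
      by_cases h1 : (m : ℕ) = 1
      · left
        change fs (oadd (oadd e1 m1 a1) m ONote.zero) n = _
        rw [fs, hp]
        simp [h1]
      · right
        refine ⟨⟨max ((m : ℕ) - 1) 1, by omega⟩, ?_, ?_⟩
        · change max ((m : ℕ) - 1) 1 < m
          omega
        · change fs (oadd (oadd e1 m1 a1) m ONote.zero) n = _
          rw [fs, hp]
          simp [h1]

lemma fs_spec {α : ONote} (hα : α.NF) (h0 : α ≠ 0) (n : ℕ) : (fs α n).NF ∧ fs α n < α := by
  induction α with
  | zero => exact absurd rfl h0
  | oadd e m a ihe iha =>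
    by_cases ha : a = 0
    · subst ha
      by_cases he : e = 0
      · subst he
        rw [fs_natural]
        refine ⟨inferInstance, ?_⟩
        have hm := m.pos
        rw [lt_def, repr_ofNat]
        have hlt : (m : ℕ) - 1 < m := by omega
        have hlt' : (((m : ℕ) - 1 : ℕ) : Ordinal.{0}) < ((m : ℕ) : Ordinal.{0}) :=
          Nat.cast_lt.2 hlt
        rwa [ONote.repr, repr_zero, Ordinal.opow_zero, one_mul, add_zero]
      · obtain ⟨hN, hlt⟩ := ihe hα.fst he
        obtain ⟨c, -, h | ⟨k, hk, h⟩⟩ := fs_omega_pow he m n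
        · rw [h]
          have hN' : (oadd (fs e n) c 0).NF := inferInstance
          exact ⟨hN', oadd_lt_oadd_1 hN' hlt⟩
        · rw [h]
          have hN' : (oadd (fs e n) c 0).NF := inferInstance
          have hN'' : (oadd e k (oadd (fs e n) c 0)).NF :=
            hα.fst.oadd k (NF.below_of_lt hlt hN')
          exact ⟨hN'', oadd_lt_oadd_2 hN'' hk⟩
    · rw [fs_oadd_of_ne_zero e m ha]
      obtain ⟨hN, hlt⟩ := iha hα.snd ha
      exact ⟨hα.fst.oadd m (NF.below_of_lt' (lt_trans hlt hα.snd'.repr_lt) hN),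
        oadd_lt_oadd_3 hlt⟩

lemma fs_eq_zero {α : ONote} {n : ℕ} (h : fs α n = 0) : α = 0 ∨ α = 1 := by
  cases α with
  | zero => exact Or.inl rfl
  | oadd e m a =>
    by_cases ha : a = 0
    · subst ha
      by_cases he : e = 0
      · subst he
        rw [fs_natural] at h
        have h' : (m : ℕ) - 1 = 0 := by
          have hr : ONote.repr (ofNat ((m : ℕ) - 1)) = ONote.repr (ofNat 0) :=
            congrArg ONote.repr h
          rwa [repr_ofNat, repr_ofNat, Nat.cast_inj] at hr
        have hm := m.pos
        obtain rfl : m = 1 := PNat.eq (by change (m : ℕ) = 1; omega)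
        exact Or.inr rfl
      · obtain ⟨c, -, h' | ⟨k, -, h'⟩⟩ := fs_omega_pow he m n <;>
          exact ONote.noConfusion (h'.symm.trans h)
    · rw [fs_oadd_of_ne_zero e m ha] at h
      exact ONote.noConfusion h

lemma fs_eq_one {α : ONote} (hα : α.NF) (h : fs α 1 = 1) : α = 2 := by
  cases α with
  | zero => exact ONote.noConfusion h
  | oadd e m a =>
    by_cases ha : a = 0
    · subst ha
      by_cases he : e = 0
      · subst he
        rw [fs_natural] at h
        have h' : (m : ℕ) - 1 = 1 := by
          have hr : ONote.repr (ofNat ((m : ℕ) - 1)) = ONote.repr (ofNat 1) :=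
            congrArg ONote.repr h
          rwa [repr_ofNat, repr_ofNat, Nat.cast_inj] at hr
        obtain rfl : m = 2 := PNat.eq (by change (m : ℕ) = 2; omega)
        rfl
      · exfalso
        obtain ⟨c, hc, h' | ⟨k, -, h'⟩⟩ := fs_omega_pow he m 1
        · have h2 : oadd (fs e 1) c 0 = oadd 0 1 0 := h'.symm.trans h
          injection h2 with h3 h4
          subst h4
          -- A limit exponent `e` would need `{e}(1) = 0`, but only `0` and `1` satisfy this.
          rcases hc with hc | hc
          · exact absurd hc (by decide)
          · rcases fs_eq_zero h3 with rfl | rfl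
            · exact he rfl
            · exact absurd hc (by decide)
        · have h2 : oadd e k (oadd (fs e 1) c 0) = oadd 0 1 0 := h'.symm.trans h
          injection h2 with h3
          exact he h3
    · rw [fs_oadd_of_ne_zero e m ha] at h
      have h2 : oadd e m (fs a 1) = oadd 0 1 0 := h
      injection h2 with h3
      exact absurd (hα.zero_of_zero h3) ha

lemma fund_fs (α : ONote) (n y : ℕ) : fund (fs α n) n y = fund α n (y + 1) := by
  induction y with
  | zero => rfl
  | succ y ih => rw [fund, ih]; rfl

lemma Step.of_fs {α β : ONote} {n : ℕ} (h : Step (fs α n) n β) : Step α n β := by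
  obtain ⟨x, y, -, hy⟩ := h
  exact ⟨y + 1, y + 1, le_rfl, by rw [← fund_fs, hy]⟩

/-- Descent principle: if the invariant `P` survives every step from a normal form other than `β`,
and `P` excludes `0` unless `β = 0`, then the descent along `{·}(n)` passes through `β`. -/
lemma step_of_invariant {n : ℕ} {β : ONote} (P : ONote → Prop)
    (hP : ∀ γ : ONote, γ.NF → P γ → γ ≠ β → γ ≠ 0 ∧ P (fs γ n))
    (α : ONote) (hα : α.NF) (hPα : P α) : Step α n β := by
  by_cases hβ : α = β
  · exact ⟨0, 0, le_rfl, hβ⟩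
  · obtain ⟨h0, hP'⟩ := hP α hα hPα hβ
    have hs := fs_spec hα h0 n
    exact Step.of_fs (step_of_invariant P hP (fs α n) hs.1 hP')
termination_by α
decreasing_by exact hs.2

/-- `α ↘₀ 0`; moreover if `α ≥ 1` then `α ↘₀ 1`, and if `α ≥ 2` then `α ↘₁ 2`. -/
theorem step_to_small (α : ONote) (hα : α.NF) :
    Step α 0 0 ∧ (1 ≤ α → Step α 0 1) ∧
      ((2 : ONote) ≤ α → Step α 1 (2 : ONote)) := by
  refine ⟨?_, fun h1 => ?_, fun h2 => ?_⟩
  · exact step_of_invariant (fun _ => True) (fun γ _ _ h => ⟨h, trivial⟩) α hα trivial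
  · refine step_of_invariant (fun γ => γ ≠ 0) (fun γ _ h0 h => ⟨h0, fun hz => ?_⟩) α hα ?_
    · exact (fs_eq_zero hz).elim h0 h
    · rintro rfl
      exact absurd ONote.zero_lt_one (not_lt_of_ge h1)
  · refine step_of_invariant (fun γ => γ ≠ 0 ∧ γ ≠ 1)
      (fun γ hγ h0 h => ⟨h0.1, fun hz => ?_, fun hz => h (fs_eq_one hγ hz)⟩) α hα ⟨?_, ?_⟩
    · exact (fs_eq_zero hz).elim h0.1 h0.2
    · rintro rfl
      have h : ONote.repr (ofNat 2) ≤ ONote.repr (ofNat 0) := h2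
      rw [repr_ofNat, repr_ofNat, Nat.cast_le] at h
      omega
    · rintro rfl
      have h : ONote.repr (ofNat 2) ≤ ONote.repr (ofNat 1) := h2
      rw [repr_ofNat, repr_ofNat, Nat.cast_le] at h
      omega

end Paper
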